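/- For all integers w, p0, p1, p2, k and all nonnegative integers u, ℓ, one has G(w,u,ℓ;p0,p1,p2) = q^{4ku} G(w+2k,u,ℓ;p0−2k,p1−k,p2−k). -/

import Mathlib

open Finset

noncomputable section

/-- The field `ℚ(q)` of rational functions over `ℚ`. -/
abbrev F : Type := RatFunc ℚ

/-- The indeterminate `q`. -/
noncomputable def qq : F := RatFunc.X

/-- The quantum integer `[n]` with base `v`: `(v^n - v^(-n))/(v - v⁻¹)`. -/
noncomputable def qint (v : F) (n : ℤ) : F := (v ^ n - v ^ (-n)) / (v - v⁻¹)

/-- The quantum factorial `[m]! = [1][2]⋯[m]` with base `v`. -/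
noncomputable def qfact (v : F) (m : ℕ) : F := ∏ k ∈ range m, qint v ((k : ℤ) + 1)

/-- The quantum binomial coefficient `C_v(n,d) = [n][n-1]⋯[n-d+1]/[d]!` for `d ≥ 0`,
and `0` for `d < 0`. -/
noncomputable def qbinom (v : F) (n d : ℤ) : F :=
  if d < 0 then 0
  else (∏ k ∈ range d.toNat, qint v (n - (k : ℤ))) / qfact v d.toNat

/-- The function `G(w,u,ℓ;p0,p1,p2)` of [CLW, (5.1)]. -/
noncomputable def G (w : ℤ) (u ℓ : ℕ) (p0 p1 p2 : ℤ) : F :=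
  (-1 : F) ^ w * qq ^ ((u : ℤ) ^ 2 - w * (u : ℤ) + (ℓ : ℤ) * (u : ℤ)) *
  ((∑ c ∈ range (u + 1), ∑ e ∈ range (u + 1 - c), ∑ t ∈ range (ℓ + 1),
      (let r : ℕ := u - c - e;
       if Even ((t : ℤ) + w - (r : ℤ)) then
         qq ^ (-(t : ℤ) * ((ℓ : ℤ) + (u : ℤ) - 1) - (u : ℤ) * ((c : ℤ) + (e : ℤ)) + 2 * (c : ℤ)
               + (r : ℤ) * p0 + 2 * (c : ℤ) * p1 + 2 * (e : ℤ) * p2)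
           * qbinom qq (ℓ : ℤ) (t : ℤ) * qbinom qq (w + (t : ℤ) + p0) (r : ℤ)
           * qbinom (qq ^ 2) ((w + (t : ℤ) - (r : ℤ)) / 2 + p1) (c : ℤ)
           * qbinom (qq ^ 2) ((w + (t : ℤ) - (r : ℤ)) / 2 + p2) (e : ℤ)
       else 0))
  - (∑ c ∈ range (u + 1), ∑ e ∈ range (u + 1 - c), ∑ t ∈ range (ℓ + 1),
      (let r : ℕ := u - c - e;
       if ¬ Even ((t : ℤ) + w - (r : ℤ)) then
         qq ^ (-(t : ℤ) * ((ℓ : ℤ) + (u : ℤ) - 1) - ((u : ℤ) - 1) * ((c : ℤ) + (e : ℤ))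
               + (r : ℤ) * p0 + 2 * (c : ℤ) * p1 + 2 * (e : ℤ) * p2)
           * qbinom qq (ℓ : ℤ) (t : ℤ) * qbinom qq (w + (t : ℤ) + p0) (r : ℤ)
           * qbinom (qq ^ 2) (1 + (w + (t : ℤ) - (r : ℤ) - 1) / 2 + p1) (c : ℤ)
           * qbinom (qq ^ 2) ((w + (t : ℤ) - (r : ℤ) - 1) / 2 + p2) (e : ℤ)
       else 0)))

lemma qq_ne_zero : qq ≠ 0 := RatFunc.X_ne_zero

/-- Shift by `2k`:
`G(w,u,ℓ;p0,p1,p2) = q^{4ku} G(w+2k,u,ℓ;p0−2k,p1−k,p2−k)`. -/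
theorem G_shift (w p0 p1 p2 k : ℤ) (u ℓ : ℕ) :
    G w u ℓ p0 p1 p2
      = qq ^ (4 * k * (u : ℤ)) * G (w + 2 * k) u ℓ (p0 - 2 * k) (p1 - k) (p2 - k) := by
  have hs : ((-1 : F)) ^ (w + 2 * k) = (-1) ^ w := by
    rw [zpow_add₀ (by simp), zpow_mul]
    simp
  have hev : ∀ t r : ℤ, Even (t + (w + 2 * k) - r) ↔ Even (t + w - r) := by
    intro t r
    have h : t + (w + 2 * k) - r = (t + w - r) + 2 * k := by ring
    rw [h, Int.even_add]
    simp
  have hpow : qq ^ (4 * k * (u : ℤ))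
        * qq ^ ((u : ℤ) ^ 2 - (w + 2 * k) * (u : ℤ) + (ℓ : ℤ) * (u : ℤ))
      = qq ^ ((u : ℤ) ^ 2 - w * (u : ℤ) + (ℓ : ℤ) * (u : ℤ)) * qq ^ (2 * k * (u : ℤ)) := by
    rw [← zpow_add₀ qq_ne_zero, ← zpow_add₀ qq_ne_zero]
    congr 1
    ring
  unfold G
  rw [hs]
  have key : ∀ A B C X Y : F, ∀ D E : F, A * B = C * D → D * X = Y → 
      E * C * Y = A * (E * B * X) := by
    intro A B C X Y D E h1 h2
    rw [← h2]
    linear_combination (-E * X) * h1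
  refine key _ _ _ _ _ _ _ hpow ?_
  rw [mul_sub]
  congr 1
  all_goals
    simp only [Finset.mul_sum]
    refine Finset.sum_congr rfl fun c hc => Finset.sum_congr rfl fun e he =>
      Finset.sum_congr rfl fun t _ => ?_
    rw [Finset.mem_range] at hc he
    obtain ⟨r, hr⟩ : ∃ r, r = u - c - e := ⟨_, rfl⟩
    have hu : (u : ℤ) = c + e + r := by omega
    simp only [← hr, hev]
    split_ifs with hpar
    all_goals
      try rw [mul_zero]
    all_goals
      have h0 : w + 2 * k + (t : ℤ) + (p0 - 2 * k) = w + t + p0 := by ring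
      first
      | have h1 : (w + 2 * k + (t : ℤ) - r) / 2 + (p1 - k) = (w + t - r) / 2 + p1 := by omega
        have h2 : (w + 2 * k + (t : ℤ) - r) / 2 + (p2 - k) = (w + t - r) / 2 + p2 := by omega
        rw [h0, h1, h2]
        simp only [← mul_assoc]
        rw [← zpow_add₀ qq_ne_zero]
        congr 5
        rw [hu]
        ring
      | have h1 : 1 + (w + 2 * k + (t : ℤ) - r - 1) / 2 + (p1 - k)
            = 1 + (w + t - r - 1) / 2 + p1 := by omega
        have h2 : (w + 2 * k + (t : ℤ) - r - 1) / 2 + (p2 - k)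
            = (w + t - r - 1) / 2 + p2 := by omega
        rw [h0, h1, h2]
        simp only [← mul_assoc]
        rw [← zpow_add₀ qq_ne_zero]
        congr 5
        rw [hu]
        ring

end
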